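/- The curvature and torsion of the normal indicatrix x_n = n are κ_n(s) = √(1 + σ(s)²) and τ_n(s) = Γ(s)·√(1 + σ(s)²) = σ'(s)/(√(κ(s)² + τ(s)²)·(1 + σ(s)²)), where f = τ/κ, σ = f'/(κ·(1 + f²)^{3/2}), and Γ = σ'/(√(κ² + τ²)·(1 + σ²)^{3/2}). In particular τ_n/κ_n = Γ. (This is Proposition 4.6 on the multiplicative curvatures of the multiplicative normal indicatrix.) -/

import Mathlib

/-!
Put `c = 1 / √(1 + f²)` and `W = √(κ² + τ²) = κ / c`, and rotate the pair `(-t, b)` by the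
angle `arctan f`: `T = -c t + f c b` and `D = f c t + c b`. Since `τ = f κ`, the Frenet equation for
`n` reads `n' = W T`, so `T` is the unit tangent of the normal indicatrix. The rotation
has angular velocity `f' / (1 + f²) = W σ`, whence the frame satisfies (`rotated`)

  `T' = W (σ D - n)`,  `D' = -W σ T`,  `n' = W T`.

Thus `‖T'‖ = W √(1 + σ²)`, which is the curvature formula, and the principal normal is
`N = (σ D - n) / √(1 + σ²)`, with `T × N = (σ n + D) / √(1 + σ²)`. The vectors `T × N` and `N`
form a frame of the plane spanned by `D` and `n` obtained by a rotation through `arctan σ`; in `N'`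
the terms coming from `D'` and `n'` are multiples of `T`, so
`⟪N', T × N⟫ = σ' / (1 + σ²)` (`torsion_aux`).

The Frenet equations themselves are derived in `frenet`.
-/

open scoped RealInnerProductSpace Topology

/-- The cross product on `ℝ³` (as `EuclideanSpace ℝ (Fin 3)`). -/
noncomputable def cross3 (u v : EuclideanSpace ℝ (Fin 3)) : EuclideanSpace ℝ (Fin 3) :=
  (WithLp.equiv 2 (Fin 3 → ℝ)).symm
    ![u 1 * v 2 - u 2 * v 1, u 2 * v 0 - u 0 * v 2, u 0 * v 1 - u 1 * v 0]

/-! ### The cross product -/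

local notation "E3" => EuclideanSpace ℝ (Fin 3)

/-- The vector triple product formula. -/
lemma cross3_cross3 (u v w : E3) : cross3 u (cross3 v w) = ⟪u, w⟫ • v - ⟪u, v⟫ • w := by
  ext i
  fin_cases i <;> simp [cross3, PiLp.inner_apply, Fin.sum_univ_three] <;> ring

lemma cross3_anticomm (u v : E3) : cross3 u v = -cross3 v u := by
  ext i
  fin_cases i <;> simp [cross3] <;> ring

lemma cross3_add_right (u v w : E3) : cross3 u (v + w) = cross3 u v + cross3 u w := by
  ext i
  fin_cases i <;> simp [cross3] <;> ring

lemma cross3_smul_right (a : ℝ) (u v : E3) : cross3 u (a • v) = a • cross3 u v := by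
  ext i
  fin_cases i <;> simp [cross3] <;> ring

lemma cross3_add_left (u v w : E3) : cross3 (u + v) w = cross3 u w + cross3 v w := by
  ext i
  fin_cases i <;> simp [cross3] <;> ring

lemma cross3_smul_left (a : ℝ) (u v : E3) : cross3 (a • u) v = a • cross3 u v := by
  ext i
  fin_cases i <;> simp [cross3] <;> ring

lemma cross3_self (u : E3) : cross3 u u = 0 := by
  ext i
  fin_cases i <;> simp [cross3] <;> ring

lemma inner_cross3_left (u v : E3) : ⟪u, cross3 u v⟫ = 0 := by
  simp [cross3, PiLp.inner_apply, Fin.sum_univ_three]; ring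

lemma inner_cross3_right (u v : E3) : ⟪v, cross3 u v⟫ = 0 := by
  simp [cross3, PiLp.inner_apply, Fin.sum_univ_three]; ring

/-- Lagrange's identity. -/
lemma inner_cross3_cross3 (u v : E3) :
    ⟪cross3 u v, cross3 u v⟫ = ⟪u, u⟫ * ⟪v, v⟫ - ⟪u, v⟫ ^ 2 := by
  simp only [PiLp.inner_apply, Fin.sum_univ_three]
  simp [cross3]
  ring

lemma hasDerivAt_cross3 {u v : ℝ → E3} {u' v' : E3} {s : ℝ}
    (hu : HasDerivAt u u' s) (hv : HasDerivAt v v' s) :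
    HasDerivAt (fun x => cross3 (u x) (v x)) (cross3 u' (v s) + cross3 (u s) v') s := by
  have hu' : ∀ i, HasDerivAt (fun x => u x i) (u' i) s := fun i =>
    ((EuclideanSpace.proj i : E3 →L[ℝ] ℝ).hasFDerivAt.comp_hasDerivAt s hu)
  have hv' : ∀ i, HasDerivAt (fun x => v x i) (v' i) s := fun i =>
    ((EuclideanSpace.proj i : E3 →L[ℝ] ℝ).hasFDerivAt.comp_hasDerivAt s hv)
  have h : HasDerivAt (fun x => (![u x 1 * v x 2 - u x 2 * v x 1, u x 2 * v x 0 - u x 0 * v x 2,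
      u x 0 * v x 1 - u x 1 * v x 0] : Fin 3 → ℝ))
      ((cross3 u' (v s) + cross3 (u s) v' : E3) : Fin 3 → ℝ) s := by
    rw [hasDerivAt_pi]
    intro i
    fin_cases i
    · exact (((hu' 1).mul (hv' 2)).sub ((hu' 2).mul (hv' 1))).congr_deriv (by simp [cross3]; ring)
    · exact (((hu' 2).mul (hv' 0)).sub ((hu' 0).mul (hv' 2))).congr_deriv (by simp [cross3]; ring)
    · exact (((hu' 0).mul (hv' 1)).sub ((hu' 1).mul (hv' 0))).congr_deriv (by simp [cross3]; ring)
  exact (EuclideanSpace.equiv (Fin 3) ℝ).symm.toContinuousLinearMap.hasFDerivAt.comp_hasDerivAt s h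

lemma contDiff_cross3 {u v : ℝ → E3} (hu : ContDiff ℝ (⊤ : ℕ∞) u) (hv : ContDiff ℝ (⊤ : ℕ∞) v) :
    ContDiff ℝ (⊤ : ℕ∞) fun x => cross3 (u x) (v x) := by
  rw [contDiff_euclidean] at hu hv ⊢
  intro i
  fin_cases i
  · exact ((hu 1).mul (hv 2)).sub ((hu 2).mul (hv 1))
  · exact ((hu 2).mul (hv 0)).sub ((hu 0).mul (hv 2))
  · exact ((hu 0).mul (hv 1)).sub ((hu 1).mul (hv 0))

/-- Expansion of a vector in the orthonormal frame `(u, v, u × v)`: evaluate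
`(u × v) × (x × (u × v))` by the triple product formula in two ways. -/
lemma eq_sum_frame {u v : E3} (hu : ⟪u, u⟫ = 1) (hv : ⟪v, v⟫ = 1) (huv : ⟪u, v⟫ = 0) (x : E3) :
    x = ⟪x, u⟫ • u + ⟪x, v⟫ • v + ⟪x, cross3 u v⟫ • cross3 u v := by
  have hbb : ⟪cross3 u v, cross3 u v⟫ = 1 := by rw [inner_cross3_cross3, hu, hv, huv]; norm_num
  have hbu : cross3 (cross3 u v) u = v := by
    rw [cross3_anticomm, cross3_cross3, hu, huv]; simp
  have hbv : cross3 (cross3 u v) v = -u := by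
    rw [cross3_anticomm, cross3_cross3, hv, real_inner_comm, huv]; simp
  have h := cross3_cross3 (cross3 u v) x (cross3 u v)
  rw [cross3_cross3 x u v, hbb, sub_eq_add_neg, ← neg_smul, cross3_add_right, cross3_smul_right,
    cross3_smul_right, hbu, hbv, one_smul, real_inner_comm x (cross3 u v)] at h
  rw [eq_sub_iff_add_eq] at h
  rw [smul_neg, neg_smul, neg_neg] at h
  rw [add_comm (⟪x, u⟫ • u), h]

/-! ### The Frenet equations -/

/-- Smoothness of curvature and torsion, orthonormality of the frame, and the Frenet equations. -/
lemma frenet {γ t n b : ℝ → E3} {κ τ : ℝ → ℝ}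
    (hγ : ContDiff ℝ (⊤ : ℕ∞) γ)
    (ht : t = deriv γ) (hunit : ∀ s, ‖t s‖ = 1)
    (hκ : κ = fun s => ‖deriv t s‖) (hκpos : ∀ s, 0 < κ s)
    (hn : n = fun s => (κ s)⁻¹ • deriv t s)
    (hb : b = fun s => cross3 (t s) (n s))
    (hτ : τ = fun s => ⟪deriv n s, b s⟫) :
    ContDiff ℝ (⊤ : ℕ∞) κ ∧ ContDiff ℝ (⊤ : ℕ∞) τ ∧
    (∀ s, ⟪t s, t s⟫ = 1 ∧ ⟪n s, n s⟫ = 1 ∧ ⟪t s, n s⟫ = 0) ∧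
    (∀ s, HasDerivAt t (κ s • n s) s ∧ HasDerivAt n (-κ s • t s + τ s • b s) s ∧
      HasDerivAt b (-τ s • n s) s) := by
  have htC : ContDiff ℝ (⊤ : ℕ∞) t := ht ▸ (contDiff_infty_iff_deriv.1 hγ).2
  have ht'C := (contDiff_infty_iff_deriv.1 htC).2
  have hκC : ContDiff ℝ (⊤ : ℕ∞) κ := by
    rw [hκ]
    refine ht'C.norm ℝ fun s h => (hκpos s).ne' ?_
    simp [hκ, h]
  have hnC : ContDiff ℝ (⊤ : ℕ∞) n := by
    rw [hn]
    exact (hκC.inv fun s => (hκpos s).ne').smul ht'C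
  have hbC : ContDiff ℝ (⊤ : ℕ∞) b := by
    rw [hb]; exact contDiff_cross3 htC hnC
  have hτC : ContDiff ℝ (⊤ : ℕ∞) τ := by
    rw [hτ]; exact (contDiff_infty_iff_deriv.1 hnC).2.inner ℝ hbC
  have hdt : ∀ s, HasDerivAt t (κ s • n s) s := fun s => by
    have h := ((contDiff_infty_iff_deriv.1 htC).1 s).hasDerivAt
    rwa [hn, smul_inv_smul₀ (hκpos s).ne']
  have hdn : ∀ s, HasDerivAt n (deriv n s) s := fun s =>
    ((contDiff_infty_iff_deriv.1 hnC).1 s).hasDerivAt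
  have htt : ∀ s, ⟪t s, t s⟫ = 1 := fun s => by
    rw [real_inner_self_eq_norm_sq, hunit]; norm_num
  have hnn : ∀ s, ⟪n s, n s⟫ = 1 := fun s => by
    have h : ‖deriv t s‖ = κ s := by rw [hκ]
    rw [real_inner_self_eq_norm_sq, hn, norm_smul, h, norm_inv, Real.norm_of_nonneg (hκpos s).le,
      inv_mul_cancel₀ (hκpos s).ne']; norm_num
  -- Differentiating `⟪u, v⟫ = a` for constant `a`.
  have key : ∀ {u v : ℝ → E3} {u' v' : E3} {s a : ℝ}, HasDerivAt u u' s → HasDerivAt v v' s →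
      (∀ x, ⟪u x, v x⟫ = a) → ⟪u s, v'⟫ + ⟪u', v s⟫ = 0 := by
    intro u v u' v' s a hu hv h
    refine (hu.inner ℝ hv).unique ?_
    simp only [h]
    exact hasDerivAt_const s a
  have htn : ∀ s, ⟪t s, n s⟫ = 0 := fun s => by
    have h := key (hdt s) (hdt s) htt
    rw [real_inner_comm (t s), inner_smul_right] at h
    have := (hκpos s).ne'
    have h2 : κ s * ⟪t s, n s⟫ = 0 := by linarith
    simpa [this] using h2
  have hdn' : ∀ s, deriv n s = -κ s • t s + τ s • b s := fun s => by
    have h1 := key (hdn s) (hdn s) hnn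
    have h2 := key (hdt s) (hdn s) htn
    rw [real_inner_comm] at h1
    rw [real_inner_comm, inner_smul_left, hnn] at h2
    have h3 : ⟪deriv n s, n s⟫ = 0 := by linarith
    have h4 : ⟪deriv n s, t s⟫ = -κ s := by simp at h2; linarith
    have h5 : ⟪deriv n s, cross3 (t s) (n s)⟫ = τ s := by rw [hτ, hb]
    have h := eq_sum_frame (htt s) (hnn s) (htn s) (deriv n s)
    rw [h3, h4, h5] at h
    rw [h, hb]
    simp
  refine ⟨hκC, hτC, fun s => ⟨htt s, hnn s, htn s⟩, fun s => ⟨hdt s, hdn' s ▸ hdn s, ?_⟩⟩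
  have h := hasDerivAt_cross3 (hdt s) (hdn' s ▸ hdn s)
  rw [← hb] at h
  refine h.congr_deriv ?_
  rw [cross3_smul_left, cross3_self, cross3_add_right, cross3_smul_right, cross3_smul_right,
    cross3_self, hb, cross3_cross3, htt, htn]
  simp

/-! ### The frame of the normal indicatrix -/

/-- The inner product of the combinations of two orthonormal vectors. -/
lemma inner_frame {u v : E3} (hu : ⟪u, u⟫ = 1) (hv : ⟪v, v⟫ = 1) (huv : ⟪u, v⟫ = 0)
    (a b c d : ℝ) : ⟪a • u + b • v, c • u + d • v⟫ = a * c + b * d := by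
  have hvu : ⟪v, u⟫ = 0 := by rw [real_inner_comm, huv]
  simp only [inner_add_left, inner_add_right, real_inner_smul_left, real_inner_smul_right, hu, hv,
    huv, hvu]
  ring

/-- The torsion of the indicatrix, up to the factor `1 / W`, from the derivatives of the
positively oriented orthonormal frame `(T, n, -D)`. The derivatives of `D` and `n` are
multiples of `T`, hence orthogonal to `T × N`. -/
lemma torsion_aux {T D n : ℝ → E3} {σ : ℝ → ℝ} {W σ' s : ℝ}
    (hσ : HasDerivAt σ σ' s)
    (hn : HasDerivAt n (W • T s) s) (hD : HasDerivAt D (-(W * σ s) • T s) s)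
    (hDD : ⟪D s, D s⟫ = 1) (hnn : ⟪n s, n s⟫ = 1) (hDn : ⟪D s, n s⟫ = 0)
    (hTD : cross3 (T s) (D s) = n s) (hTn : cross3 (T s) (n s) = -D s)
    {N : ℝ → E3} (hN : N = fun x => (Real.sqrt (1 + σ x ^ 2))⁻¹ • (σ x • D x - n x)) :
    ⟪deriv N s, cross3 (T s) (N s)⟫ = σ' / (1 + σ s ^ 2) := by
  have hq : 0 < 1 + σ s ^ 2 := by positivity
  have hr : HasDerivAt (fun x => (Real.sqrt (1 + σ x ^ 2))⁻¹)
      (-(2 * σ s * σ' / (2 * Real.sqrt (1 + σ s ^ 2))) / Real.sqrt (1 + σ s ^ 2) ^ 2) s := by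
    refine (((hσ.pow 2).const_add 1).sqrt hq.ne').inv (Real.sqrt_pos.2 hq).ne' |>.congr_deriv ?_
    simp
  have hN' : HasDerivAt (fun x => (Real.sqrt (1 + σ x ^ 2))⁻¹ • (σ x • D x - n x)) _ s :=
    hr.smul ((hσ.smul hD).sub hn)
  have hTD0 : ⟪T s, D s⟫ = 0 := by
    rw [← neg_eq_zero, ← inner_neg_right, ← hTn, inner_cross3_left]
  have hTn0 : ⟪T s, n s⟫ = 0 := by rw [← hTD, inner_cross3_left]
  have hnD : ⟪n s, D s⟫ = 0 := by rw [real_inner_comm, hDn]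
  have hB : cross3 (T s) (N s) = (Real.sqrt (1 + σ s ^ 2))⁻¹ • (σ s • n s + D s) := by
    rw [hN]
    simp only [cross3_smul_right, sub_eq_add_neg, cross3_add_right, hTD]
    rw [← neg_one_smul ℝ (n s), cross3_smul_right, hTn]
    simp
  have hs := Real.sq_sqrt hq.le
  have hs0 := Real.sqrt_pos.2 hq
  rw [hB, hN, HasDerivAt.deriv hN']
  simp only [inner_add_left, inner_add_right, inner_sub_left, real_inner_smul_left,
    real_inner_smul_right, hDD, hnn, hDn, hnD, hTD0, hTn0]
  conv_rhs => rw [← hs]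
  field_simp
  ring_nf

/-- The frame `(T, D)` obtained by rotating the pair `(-t, b)` by the angle `arctan f`, and its
derivatives: `c` is the cosine of that angle, `f c` its sine, and `f' c²` the derivative of the
angle. -/
lemma rotated {t n b : ℝ → E3} {κ τ f : ℝ → ℝ} {s f' : ℝ}
    (htt : ⟪t s, t s⟫ = 1) (hnn : ⟪n s, n s⟫ = 1) (htn : ⟪t s, n s⟫ = 0)
    (hbs : b s = cross3 (t s) (n s))
    (ht : HasDerivAt t (κ s • n s) s) (hb : HasDerivAt b (-τ s • n s) s)
    (hf : HasDerivAt f f' s) (hτ : τ s = f s * κ s) {c : ℝ → ℝ}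
    (hc : c = fun x => (Real.sqrt (1 + f x ^ 2))⁻¹)
    {T D : ℝ → E3} (hT : T = fun x => -c x • t x + (f x * c x) • b x)
    (hD : D = fun x => (f x * c x) • t x + c x • b x) :
    ⟪T s, T s⟫ = 1 ∧ ⟪D s, D s⟫ = 1 ∧ ⟪D s, n s⟫ = 0 ∧ cross3 (T s) (D s) = n s ∧
      cross3 (T s) (n s) = -D s ∧ HasDerivAt T ((f' * c s ^ 2) • D s - (κ s / c s) • n s) s ∧
      HasDerivAt D (-(f' * c s ^ 2) • T s) s := by
  have hq : 0 < 1 + f s ^ 2 := by positivity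
  have hw := Real.sqrt_pos.2 hq
  have hc0 : 0 < c s := by rw [hc]; exact inv_pos.2 hw
  have hc2 : c s ^ 2 * (1 + f s ^ 2) = 1 := by
    simp only [hc]; rw [inv_pow, Real.sq_sqrt hq.le, inv_mul_cancel₀ hq.ne']
  have hdc : HasDerivAt c (-f s * f' * c s ^ 3) s := by
    simp only [hc]
    refine (((hf.pow 2).const_add 1).sqrt hq.ne').inv hw.ne' |>.congr_deriv ?_
    simp
    field_simp
  have hdfc : HasDerivAt (fun x => f x * c x) (f' * c s ^ 3) s := by
    refine (hf.mul hdc).congr_deriv ?_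
    linear_combination -f' * c s * hc2
  have hbb : ⟪b s, b s⟫ = 1 := by
    rw [hbs, inner_cross3_cross3, htt, hnn, htn]; norm_num
  have htb : ⟪t s, b s⟫ = 0 := by rw [hbs, inner_cross3_left]
  have hbn : ⟪b s, n s⟫ = 0 := by rw [real_inner_comm, hbs, inner_cross3_right]
  have xtb : cross3 (t s) (b s) = -n s := by rw [hbs, cross3_cross3, htt, htn]; simp
  have xbt : cross3 (b s) (t s) = n s := by rw [cross3_anticomm, xtb, neg_neg]
  have xbn : cross3 (b s) (n s) = -t s := by
    rw [cross3_anticomm, hbs, cross3_cross3, hnn, real_inner_comm, htn]; simp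
  refine ⟨?_, ?_, ?_, ?_, ?_, ?_, ?_⟩
  · rw [hT]; simp only []; rw [inner_frame htt hbb htb]; linear_combination hc2
  · rw [hD]; simp only []; rw [inner_frame htt hbb htb]; linear_combination hc2
  · simp [hD, inner_add_left, real_inner_smul_left, htn, hbn]
  · simp only [hT, hD, cross3_add_left, cross3_add_right, cross3_smul_left, cross3_smul_right,
      cross3_self, xtb, xbt]
    trans (c s ^ 2 * (1 + f s ^ 2)) • n s
    · module
    · rw [hc2, one_smul]
  · simp only [hT, hD, cross3_add_left, cross3_smul_left, ← hbs, xbn]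
    module
  · rw [hT]
    refine ((hdc.neg.smul ht).add (hdfc.smul hb)).congr_deriv ?_
    have h : κ s / c s = κ s * c s * (1 + f s ^ 2) := by
      rw [div_eq_iff hc0.ne']; linear_combination -κ s * hc2
    rw [h, hD, hτ]
    simp only [Pi.neg_apply]
    module
  · rw [hD]
    refine ((hdfc.smul ht).add (hdc.smul hb)).congr_deriv ?_
    rw [hT, hτ]
    module

/-! ### Curvature and torsion of the normal indicatrix -/

lemma rpow_three_halves {x : ℝ} (hx : 0 < x) : x ^ ((3 : ℝ) / 2) = x * Real.sqrt x := by
  rw [Real.sqrt_eq_rpow, ← Real.rpow_one_add' hx.le (by norm_num)]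
  norm_num

/-- Proposition 4.6 (classical form): the curvature and torsion of the normal
indicatrix `x_n = n` are `κ_n = √(1+σ²)` and
`τ_n = Γ·√(1+σ²) = σ'/(√(κ²+τ²)·(1+σ²))`; in particular `τ_n/κ_n = Γ`. -/
theorem normal_indicatrix_curvatures
    (γ : ℝ → EuclideanSpace ℝ (Fin 3))
    (hγ : ContDiff ℝ (⊤ : ℕ∞) γ)
    (t n b : ℝ → EuclideanSpace ℝ (Fin 3)) (κ τ : ℝ → ℝ)
    (ht : t = deriv γ)
    (hunit : ∀ s, ‖t s‖ = 1)
    (hκ : κ = fun s => ‖deriv t s‖)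
    (hκpos : ∀ s, 0 < κ s)
    (hn : n = fun s => (κ s)⁻¹ • deriv t s)
    (hb : b = fun s => cross3 (t s) (n s))
    (hτ : τ = fun s => ⟪deriv n s, b s⟫)
    (f : ℝ → ℝ) (hf : f = fun s => τ s / κ s)
    (σ : ℝ → ℝ)
    (hσ : σ = fun s => deriv f s / (κ s * (1 + f s ^ 2) ^ ((3 : ℝ) / 2)))
    (Γ : ℝ → ℝ)
    (hΓ : Γ = fun s => deriv σ s /
      (Real.sqrt (κ s ^ 2 + τ s ^ 2) * (1 + σ s ^ 2) ^ ((3 : ℝ) / 2)))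
    (Tn Nn Bn : ℝ → EuclideanSpace ℝ (Fin 3))
    (hTn : Tn = fun s => ‖deriv n s‖⁻¹ • deriv n s)
    (hNn : Nn = fun s => ‖deriv Tn s‖⁻¹ • deriv Tn s)
    (hBn : Bn = fun s => cross3 (Tn s) (Nn s))
    (κn τn : ℝ → ℝ)
    (hκn : κn = fun s => ‖deriv Tn s‖ / Real.sqrt (κ s ^ 2 + τ s ^ 2))
    (hτn : τn = fun s => ⟪deriv Nn s, Bn s⟫ / Real.sqrt (κ s ^ 2 + τ s ^ 2))
    :
    ∀ s : ℝ,
      κn s = Real.sqrt (1 + σ s ^ 2) ∧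
      τn s = Γ s * Real.sqrt (1 + σ s ^ 2) ∧
      τn s = deriv σ s / (Real.sqrt (κ s ^ 2 + τ s ^ 2) * (1 + σ s ^ 2)) ∧
      τn s / κn s = Γ s := by
  obtain ⟨hκC, hτC, hort, hder⟩ := frenet hγ ht hunit hκ hκpos hn hb hτ
  have hfC : ContDiff ℝ (⊤ : ℕ∞) f := by
    rw [hf]; exact hτC.div hκC fun s => (hκpos s).ne'
  have hpos : ∀ x : ℝ, 0 < 1 + x ^ 2 := fun x => by positivity
  have hσC : ContDiff ℝ (⊤ : ℕ∞) σ := by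
    rw [hσ]
    refine (contDiff_infty_iff_deriv.1 hfC).2.div (hκC.mul
      ((contDiff_const.add (hfC.pow 2)).rpow_const_of_ne fun s => (hpos _).ne')) fun s => ?_
    exact (mul_pos (hκpos s) (Real.rpow_pos_of_pos (hpos _) _)).ne'
  have hdf : ∀ s, HasDerivAt f (deriv f s) s := fun s =>
    ((contDiff_infty_iff_deriv.1 hfC).1 s).hasDerivAt
  have hdσ : ∀ s, HasDerivAt σ (deriv σ s) s := fun s =>
    ((contDiff_infty_iff_deriv.1 hσC).1 s).hasDerivAt
  have hτf : ∀ s, τ s = f s * κ s := fun s => by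
    rw [hf, div_mul_cancel₀ _ (hκpos s).ne']
  obtain ⟨c, hc⟩ : ∃ c : ℝ → ℝ, c = fun x => (Real.sqrt (1 + f x ^ 2))⁻¹ := ⟨_, rfl⟩
  obtain ⟨T, hT⟩ : ∃ T : ℝ → E3, T = fun x => -c x • t x + (f x * c x) • b x := ⟨_, rfl⟩
  obtain ⟨D, hD⟩ : ∃ D : ℝ → E3, D = fun x => (f x * c x) • t x + c x • b x := ⟨_, rfl⟩
  have hrot := fun s => rotated (hort s).1 (hort s).2.1 (hort s).2.2
    (congrFun hb s) (hder s).1 (hder s).2.2 (hdf s) (hτf s) hc hT hD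
  choose hTT hDD hDn hxD hxn hdT hdD using hrot
  have hc0 : ∀ s, 0 < c s := fun s => by rw [hc]; exact inv_pos.2 (Real.sqrt_pos.2 (hpos _))
  have hcw : ∀ s, Real.sqrt (1 + f s ^ 2) = (c s)⁻¹ := fun s => by rw [hc, inv_inv]
  have hc2 : ∀ s, 1 + f s ^ 2 = ((c s)⁻¹) ^ 2 := fun s => by
    rw [← hcw, Real.sq_sqrt (hpos _).le]
  -- This is the speed `W` of the normal indicatrix.
  have hW : ∀ s, Real.sqrt (κ s ^ 2 + τ s ^ 2) = κ s / c s := fun s => by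
    rw [Real.sqrt_eq_iff_mul_self_eq_of_pos (div_pos (hκpos s) (hc0 s)), hτf]
    linear_combination -κ s ^ 2 * hc2 s
  have hWpos : ∀ s, 0 < κ s / c s := fun s => div_pos (hκpos s) (hc0 s)
  have hWσ : ∀ s, deriv f s * c s ^ 2 = κ s / c s * σ s := fun s => by
    have := (hκpos s).ne'
    have := (hc0 s).ne'
    rw [hσ]
    simp only []
    rw [rpow_three_halves (hpos _), hcw, hc2]
    field_simp
  have hn' : ∀ s, HasDerivAt n ((κ s / c s) • T s) s := fun s => by
    refine (hder s).2.1.congr_deriv ?_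
    have := (hc0 s).ne'
    rw [hT, hτf, smul_add, smul_smul, smul_smul]
    congr 2 <;> field_simp
  have hnT : ∀ s, ‖T s‖ = 1 := fun s => by
    rw [← sq_eq_sq₀ (norm_nonneg _) zero_le_one, ← real_inner_self_eq_norm_sq, hTT, one_pow]
  have hTnT : Tn = T := by
    rw [hTn]
    funext s
    rw [(hn' s).deriv, norm_smul, hnT, Real.norm_of_nonneg (hWpos s).le, mul_one,
      inv_smul_smul₀ (hWpos s).ne']
  have hdT' : ∀ s, deriv T s = (κ s / c s) • (σ s • D s - n s) := fun s => by
    rw [(hdT s).deriv, hWσ]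
    module
  have hnv : ∀ s, ‖σ s • D s - n s‖ = Real.sqrt (1 + σ s ^ 2) := fun s => by
    have h := inner_frame (hDD s) (hort s).2.1 (hDn s) (σ s) (-1) (σ s) (-1)
    rw [neg_one_smul, ← sub_eq_add_neg, real_inner_self_eq_norm_sq] at h
    rw [← Real.sqrt_sq (norm_nonneg (σ s • D s - n s)), h]
    congr 1; ring
  have hndT : ∀ s, ‖deriv T s‖ = κ s / c s * Real.sqrt (1 + σ s ^ 2) := fun s => by
    rw [hdT', norm_smul, hnv, Real.norm_of_nonneg (hWpos s).le]
  have hN : Nn = fun x => (Real.sqrt (1 + σ x ^ 2))⁻¹ • (σ x • D x - n x) := by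
    rw [hNn, hTnT]
    funext s
    rw [hndT, hdT', smul_smul, mul_inv_rev, inv_mul_cancel_right₀ (hWpos s).ne']
  intro s
  have hq := hpos (σ s)
  have hr := Real.sqrt_pos.2 hq
  have hrs := Real.sq_sqrt hq.le
  have h1 : κn s = Real.sqrt (1 + σ s ^ 2) := by
    rw [hκn, hTnT]
    simp only []
    rw [hndT, hW, mul_div_cancel_left₀ _ (hWpos s).ne']
  have h3 : τn s = deriv σ s / (Real.sqrt (κ s ^ 2 + τ s ^ 2) * (1 + σ s ^ 2)) := by
    rw [hτn, hBn, hTnT]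
    simp only []
    rw [torsion_aux (hdσ s) (hn' s) ((hdD s).congr_deriv (by rw [hWσ])) (hDD s)
      (hort s).2.1 (hDn s) (hxD s) (hxn s) hN, div_div, mul_comm]
  have h4 : Γ s = τn s / κn s := by
    rw [h1, h3, hΓ]
    simp only []
    rw [rpow_three_halves hq, div_div, mul_assoc]
  refine ⟨h1, ?_, h3, h4.symm⟩
  rw [h4, h1, div_mul_cancel₀ _ hr.ne']
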